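/- Let f ∈ L¹([0,1]²) with ‖f‖_{L_{(1,2)}} < ∞. Then for every N₁ ∈ ℕ, every finite set e ⊂ ℕ with card e = N₁, and every family assigning to each m₁ ∈ e a finite set ω(m₁) ⊂ ℕ, one has (Σ_{m₁∈e} Σ_{m₂∈ω(m₁)} |a_{m₁m₂}|²)^{1/2} ≤ M₁ N₁^{1/2} ‖f‖_{L_{(1,2)}}. -/

import Mathlib

open MeasureTheory Set ENNReal

/-- The mixed-norm Lebesgue (quasi-)norm on `[0,1]²`:
`‖f‖_{L_{(p₁,p₂)}} = (∫₀¹(∫₀¹|f(x₁,x₂)|^{p₁} dx₁)^{p₂/p₁} dx₂)^{1/p₂}`. -/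
noncomputable def mixedNorm (p₁ p₂ : ℝ) (f : ℝ → ℝ → ℂ) : ℝ≥0∞ :=
  (∫⁻ x₂ in Icc (0:ℝ) 1,
      (∫⁻ x₁ in Icc (0:ℝ) 1, (‖f x₁ x₂‖₊ : ℝ≥0∞) ^ p₁) ^ (p₂ / p₁)) ^ (1 / p₂)

/-- `φ` is an orthonormal system in `L²[0,1]`. -/
def OrthonormalOn01 (φ : ℕ → ℝ → ℂ) : Prop :=
  ∀ m n : ℕ,
    ∫ x in Icc (0:ℝ) 1, φ m x * (starRingEnd ℂ) (φ n x) = if m = n then 1 else 0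

/-- The Fourier coefficients of `f` with respect to the product system
`φ_{k₁}(x₁) ψ_{k₂}(x₂)`. -/
noncomputable def coeff (φ ψ : ℕ → ℝ → ℂ) (f : ℝ → ℝ → ℂ) (k₁ k₂ : ℕ) : ℂ :=
  ∫ x₂ in Icc (0:ℝ) 1, ∫ x₁ in Icc (0:ℝ) 1,
    f x₁ x₂ * (starRingEnd ℂ) (φ k₁ x₁) * (starRingEnd ℂ) (ψ k₂ x₂)


/-- Bessel's inequality for a finite part of an orthonormal system, in lintegral form. -/
lemma bessel_aux (μ : Measure ℝ) (ψ : ℕ → ℝ → ℂ) (hψ : ∀ m, MemLp (ψ m) 2 μ)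
    (ho : ∀ m n : ℕ, ∫ x, ψ m x * (starRingEnd ℂ) (ψ n x) ∂μ = if m = n then 1 else 0)
    (g : ℝ → ℂ) (hg : MemLp g 2 μ) (s : Finset ℕ) :
    ∑ m ∈ s, (‖∫ x, g x * (starRingEnd ℂ) (ψ m x) ∂μ‖₊ : ℝ≥0∞) ^ (2:ℝ)
      ≤ ∫⁻ x, ‖g x‖ₑ ^ (2:ℝ) ∂μ := by
  let v : ℕ → Lp ℂ 2 μ := fun m => (hψ m).toLp (ψ m)
  let G : Lp ℂ 2 μ := hg.toLp g
  have key : ∀ (m : ℕ) (h : ℝ → ℂ) (hh : MemLp h 2 μ),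
      inner ℂ (v m) (hh.toLp h) = ∫ x, h x * (starRingEnd ℂ) (ψ m x) ∂μ := by
    intro m h hh
    rw [L2.inner_def]
    apply integral_congr_ae
    filter_upwards [(hψ m).coeFn_toLp, hh.coeFn_toLp] with x h1 h2
    simp only [v, h1, h2, RCLike.inner_apply]
  have hv : Orthonormal ℂ v := by
    rw [orthonormal_iff_ite]
    intro i j
    rw [key i (ψ j) (hψ j), ho]
    simp [eq_comm]
  have h := hv.sum_inner_products_le (x := G) (s := s)
  have hn : ENNReal.ofReal (‖G‖ ^ 2) = ∫⁻ x, ‖g x‖ₑ ^ (2:ℝ) ∂μ := by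
    rw [ENNReal.ofReal_pow (norm_nonneg _), Lp.norm_toLp, ENNReal.ofReal_toReal hg.2.ne,
      eLpNorm_eq_lintegral_rpow_enorm_toReal (by norm_num) (by norm_num)]
    rw [← ENNReal.rpow_natCast, ← ENNReal.rpow_mul]
    norm_num
  rw [← hn]
  refine le_trans (le_of_eq ?_) (ENNReal.ofReal_le_ofReal h)
  rw [ENNReal.ofReal_sum_of_nonneg (fun _ _ => by positivity)]
  refine Finset.sum_congr rfl fun m _ => ?_
  rw [key m g hg, ENNReal.ofReal_pow (norm_nonneg _), ofReal_norm_eq_enorm,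
    ← ENNReal.rpow_natCast]
  rfl

/-- Second inequality of Lemma 5.1:
`(Σ_{m₁∈e} Σ_{m₂∈ω(m₁)} |a_{m₁m₂}|²)^{1/2} ≤ M₁ N₁^{1/2} ‖f‖_{L_{(1,2)}}`
whenever `e` has cardinality `N₁`. -/
theorem stmt_7 (φ ψ : ℕ → ℝ → ℂ) (M₁ M₂ : ℝ)
    (hφm : ∀ m, Measurable (φ m)) (hψm : ∀ m, Measurable (ψ m))
    (hφ : OrthonormalOn01 φ) (hψ : OrthonormalOn01 ψ)
    (hφbd : ∀ m, ∀ x ∈ Icc (0:ℝ) 1, ‖φ m x‖ ≤ M₁)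
    (hψbd : ∀ m, ∀ x ∈ Icc (0:ℝ) 1, ‖ψ m x‖ ≤ M₂)
    (f : ℝ → ℝ → ℂ)
    (hfint : IntegrableOn (Function.uncurry f) (Icc (0:ℝ) 1 ×ˢ Icc (0:ℝ) 1))
    (hffin : mixedNorm 1 2 f ≠ ⊤)
    (N₁ : ℕ) (e : Finset ℕ) (he : e.card = N₁) (ω : ℕ → Finset ℕ) :
    (∑ m₁ ∈ e, ∑ m₂ ∈ ω m₁, (‖coeff φ ψ f m₁ m₂‖₊ : ℝ≥0∞) ^ (2:ℝ)) ^ ((1:ℝ)/2)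
      ≤ ENNReal.ofReal M₁ * (N₁ : ℝ≥0∞) ^ ((1:ℝ)/2) * mixedNorm 1 2 f := by
  set μ : Measure ℝ := volume.restrict (Icc (0:ℝ) 1) with hμ
  have hae : ∀ᵐ x ∂μ, x ∈ Icc (0:ℝ) 1 := ae_restrict_mem measurableSet_Icc
  have hψL : ∀ m, MemLp (ψ m) 2 μ := fun m =>
    MemLp.of_bound (hψm m).aestronglyMeasurable M₂
      (by filter_upwards [hae] with x hx using hψbd m x hx)
  set I : ℝ≥0∞ := ∫⁻ x₂, (∫⁻ x₁, ‖f x₁ x₂‖ₑ ∂μ) ^ (2:ℝ) ∂μ with hI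
  have hmix : mixedNorm 1 2 f = I ^ ((1:ℝ)/2) := by
    simp only [mixedNorm, ENNReal.rpow_one, div_one]
    rfl
  have hItop : I ≠ ⊤ := by
    intro h
    rw [hmix, h] at hffin
    exact hffin (ENNReal.top_rpow_of_pos (by norm_num))
  have hfm : AEStronglyMeasurable (Function.uncurry f) (μ.prod μ) := by
    have := hfint.aestronglyMeasurable
    rwa [Measure.volume_eq_prod, ← Measure.prod_restrict] at this
  have main : ∀ m₁, ∑ m₂ ∈ ω m₁, (‖coeff φ ψ f m₁ m₂‖₊ : ℝ≥0∞) ^ (2:ℝ)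
      ≤ ENNReal.ofReal M₁ ^ (2:ℝ) * I := by
    intro m₁
    let g : ℝ → ℂ := fun x₂ => ∫ x₁, f x₁ x₂ * (starRingEnd ℂ) (φ m₁ x₁) ∂μ
    have hgm : AEStronglyMeasurable g μ := by
      have h1 : AEStronglyMeasurable
          (fun z : ℝ × ℝ => f z.2 z.1 * (starRingEnd ℂ) (φ m₁ z.2)) (μ.prod μ) := by
        refine AEStronglyMeasurable.mul hfm.prod_swap ?_
        have : Measurable (fun z : ℝ × ℝ => (starRingEnd ℂ) (φ m₁ z.2)) :=
          Complex.continuous_conj.measurable.comp ((hφm m₁).comp measurable_snd)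
        exact this.aestronglyMeasurable
      exact h1.integral_prod_right'
    have hgb : ∀ x₂, ‖g x₂‖ₑ ≤ ENNReal.ofReal M₁ * ∫⁻ x₁, ‖f x₁ x₂‖ₑ ∂μ := by
      intro x₂
      refine (enorm_integral_le_lintegral_enorm _).trans ?_
      rw [← lintegral_const_mul' _ _ ENNReal.ofReal_ne_top]
      refine lintegral_mono_ae ?_
      filter_upwards [hae] with x hx
      rw [enorm_mul, mul_comm]
      gcongr
      rw [← ofReal_norm_eq_enorm, RCLike.norm_conj]
      exact ENNReal.ofReal_le_ofReal (hφbd m₁ x hx)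
    have hgI : ∫⁻ x, ‖g x‖ₑ ^ (2:ℝ) ∂μ ≤ ENNReal.ofReal M₁ ^ (2:ℝ) * I := by
      rw [hI, ← lintegral_const_mul' _ _ (by simp)]
      refine lintegral_mono fun x => ?_
      rw [← ENNReal.mul_rpow_of_nonneg _ _ (by norm_num)]
      exact ENNReal.rpow_le_rpow (hgb x) (by norm_num)
    have hgL : MemLp g 2 μ := by
      refine ⟨hgm, ?_⟩
      rw [eLpNorm_lt_top_iff_lintegral_rpow_enorm_lt_top (by norm_num) (by norm_num)]
      refine lt_of_le_of_lt hgI ?_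
      exact ENNReal.mul_lt_top (by simp) hItop.lt_top
    refine le_trans (le_of_eq ?_) ((bessel_aux μ ψ hψL hψ g hgL (ω m₁)).trans hgI)
    refine Finset.sum_congr rfl fun m₂ _ => ?_
    have : coeff φ ψ f m₁ m₂ = ∫ x, g x * (starRingEnd ℂ) (ψ m₂ x) ∂μ := by
      simp only [coeff, g, integral_mul_const]
      rfl
    rw [this]
  have hsum : ∑ m₁ ∈ e, ∑ m₂ ∈ ω m₁, (‖coeff φ ψ f m₁ m₂‖₊ : ℝ≥0∞) ^ (2:ℝ)
      ≤ (N₁ : ℝ≥0∞) * (ENNReal.ofReal M₁ ^ (2:ℝ) * I) := by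
    refine (Finset.sum_le_sum fun m₁ _ => main m₁).trans ?_
    rw [Finset.sum_const, he, nsmul_eq_mul]
  refine (ENNReal.rpow_le_rpow hsum (by norm_num : (0:ℝ) ≤ 1/2)).trans (le_of_eq ?_)
  rw [hmix, ENNReal.mul_rpow_of_nonneg _ _ (by norm_num),
    ENNReal.mul_rpow_of_nonneg _ _ (by norm_num), ← ENNReal.rpow_mul]
  norm_num
  ring
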